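/- Let X be a compact Hausdorff topological space and μ a finite Borel measure on X with full support. Let φ : X → M₃(ℝ) be a continuous map into the 3×3 real matrices such that the set {x ∈ X : rank φ(x) ≥ 2} is dense in X. If ψ : X → ℝ is a continuous function such that ∫_X trace(adjugate(φ(x)) · B(x)) ψ(x) dμ(x) = 0 for every continuous map B : X → M₃(ℝ), then ψ ≡ 0 on X. -/

import Mathlib

/-!
Test the orthogonality relation against `B x = ψ x • (adjugate (φ x))ᵀ`. The integrand becomes
`ψ x ^ 2` times the sum of the squares of the entries of `adjugate (φ x)`, which is continuous
and nonnegative, so by full support it vanishes identically. Where `φ x` has rank at least two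
its adjugate is nonzero (`rank_le_one_of_adjugate_eq_zero`), hence `ψ x = 0` there, and
density together with continuity gives `ψ = 0` everywhere.
-/

open MeasureTheory Matrix

/-- The entries of the adjugate are, up to sign, the `2 × 2` minors; when they all vanish, every
column is a multiple of the column through any fixed nonzero entry. -/
lemma rank_le_one_of_adjugate_eq_zero (A : Matrix (Fin 3) (Fin 3) ℝ) (hA : A.adjugate = 0) :
    A.rank ≤ 1 := by
  by_cases h0 : A = 0
  · simp [h0]
  obtain ⟨i, j, hij⟩ : ∃ i j, A i j ≠ 0 := by
    by_contra! hc
    exact h0 (Matrix.ext hc)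
  have minors : ∀ i j k l, A k l * A i j = A k j * A i l := by
    have e : ∀ a b, A.adjugate a b = 0 := fun a b => by rw [hA]; rfl
    have e00 := e 0 0
    have e01 := e 0 1
    have e02 := e 0 2
    have e10 := e 1 0
    have e11 := e 1 1
    have e12 := e 1 2
    have e20 := e 2 0
    have e21 := e 2 1
    have e22 := e 2 2
    simp [adjugate_fin_three] at e00 e01 e02 e10 e11 e12 e20 e21 e22
    intro i j k l
    fin_cases i <;> fin_cases j <;> fin_cases k <;> fin_cases l <;> simp <;> linarith
  have hfac : A = vecMulVec (fun k => A k j / A i j) (A i) := by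
    ext k l
    rw [vecMulVec_apply, div_mul_eq_mul_div, eq_div_iff hij]
    exact minors i j k l
  rw [hfac]
  exact rank_vecMulVec_le _ _

/-- analytic core of Proposition 4.2.
If `φ` is a continuous 3×3-matrix-valued map whose rank-≥-2 locus is dense, and a continuous
function `ψ` is L²-orthogonal to `x ↦ trace (adjugate (φ x) * B x)` for every continuous
test field `B`, then `ψ ≡ 0`. -/
theorem statement5
    {X : Type*} [TopologicalSpace X] [CompactSpace X] [T2Space X]
    [MeasurableSpace X] [BorelSpace X]
    (μ : Measure X) [IsFiniteMeasure μ] [μ.IsOpenPosMeasure]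
    (φ : C(X, Matrix (Fin 3) (Fin 3) ℝ))
    (hφ : Dense {x : X | 2 ≤ (φ x).rank})
    (ψ : C(X, ℝ))
    (h : ∀ B : C(X, Matrix (Fin 3) (Fin 3) ℝ),
        ∫ x, ((φ x).adjugate * B x).trace * ψ x ∂μ = 0) :
    ∀ x : X, ψ x = 0 := by
  let B : C(X, Matrix (Fin 3) (Fin 3) ℝ) :=
    ⟨fun x => ψ x • (φ x).adjugateᵀ,
      ψ.continuous.smul φ.continuous.matrix_adjugate.matrix_transpose⟩
  have key : ∀ x, ((φ x).adjugate * B x).trace * ψ x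
      = ψ x ^ 2 * ((φ x).adjugate * (φ x).adjugateᵀ).trace := by
    intro x
    change ((φ x).adjugate * (ψ x • (φ x).adjugateᵀ)).trace * ψ x = _
    rw [Matrix.mul_smul, Matrix.trace_smul, smul_eq_mul]
    ring
  have hB := h B
  simp_rw [key] at hB
  have hcont : Continuous fun x => ψ x ^ 2 * ((φ x).adjugate * (φ x).adjugateᵀ).trace :=
    (ψ.continuous.pow 2).mul
      (φ.continuous.matrix_adjugate.matrix_mul
        φ.continuous.matrix_adjugate.matrix_transpose).matrix_trace
  have hnonneg : 0 ≤ fun x => ψ x ^ 2 * ((φ x).adjugate * (φ x).adjugateᵀ).trace := by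
    intro x
    refine mul_nonneg (sq_nonneg _) ?_
    simpa using (posSemidef_self_mul_conjTranspose (φ x).adjugate).trace_nonneg
  have hint : Integrable (fun x => ψ x ^ 2 * ((φ x).adjugate * (φ x).adjugateᵀ).trace) μ :=
    hcont.integrable_of_hasCompactSupport (HasCompactSupport.of_compactSpace _)
  have hzero : (fun x => ψ x ^ 2 * ((φ x).adjugate * (φ x).adjugateᵀ).trace) = fun _ => 0 :=
    (hcont.ae_eq_iff_eq μ continuous_const).1
      ((integral_eq_zero_iff_of_nonneg hnonneg hint).1 hB)
  have hdense : Set.EqOn ψ (fun _ => 0) {x : X | 2 ≤ (φ x).rank} := by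
    intro x hx
    rcases mul_eq_zero.1 (congrFun hzero x) with hψ | htr
    · exact pow_eq_zero_iff two_ne_zero |>.1 hψ
    · have hadj : (φ x).adjugate = 0 := by
        rw [← trace_mul_conjTranspose_self_eq_zero_iff]
        simpa using htr
      have h1 := rank_le_one_of_adjugate_eq_zero _ hadj
      have h2 : 2 ≤ (φ x).rank := hx
      omega
  exact congrFun (ψ.continuous.ext_on hφ continuous_const hdense)
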